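/- Let n ≥ 1 and let p⁺, q⁺, p⁻, q⁻ be real bivariate polynomials of total degree at most n. If the first-order Melnikov function M is not identically zero on (0,∞), then M has at most 6⌊n/2⌋ + 6 zeros in (0,∞), counted with multiplicity (order of vanishing). -/

import Mathlib

/-!
In the coordinate `u = σ(h)` the Melnikov function is a polynomial of degree at most `3(n+1)`.

The integrands are restrictions to the circle `x² + y² = h` of the polynomials
`P^± = q^± y + p^± x`, of degree at most `n + 1`, so it suffices to treat the half-circle integral
of a monomial `xⁱyʲ`. Differentiating `x^{i+1}y^{j+1}` along the circle gives a reduction formula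
expressing the integrals of `x^{i+2}yʲ` and `xⁱy^{j+2}` through `h` times the integral of `xⁱyʲ` and
the value of `x^{i+1}y^{j+1}` at the end points `±(u, u³)`. As `h = u² + u⁶`, an induction shows
that the integral of `xⁱyʲ` is a polynomial in `u` of degree at most `3(i+j)` (`goodAt_monomial`).

Thus `M ∘ φ = F` on `(0,∞)` with `φ(u) = u² + u⁶` and `F` a polynomial of degree at most
`3(n+1) ≤ 6⌊n/2⌋ + 6`. Since `φ' ≠ 0` on `(0,∞)`, `M` is analytic there and its order of vanishing
at `h` is the multiplicity of the root `σ(h)` of `F` (`le_rootMultiplicity`). The `σ(h)` are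
distinct, and a non-zero polynomial has at most as many roots as its degree, with multiplicity.
-/


open MeasureTheory intervalIntegral

/-- `τ(h) = arctan(σ(h)²)`, the angle of the intersection point of the circle
`x² + y² = h` with the switching curve `y = x³`. -/
noncomputable def tau (σ : ℝ → ℝ) (h : ℝ) : ℝ := Real.arctan ((σ h) ^ 2)

/-- `J i j h = h^((i+j+1)/2) ∫_{τ(h)}^{τ(h)+π} cosⁱθ sin^{j+1}θ dθ = ∫_{L_h⁺} xⁱ yʲ dx`. -/
noncomputable def J (σ : ℝ → ℝ) (i j : ℕ) (h : ℝ) : ℝ :=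
  h ^ (((i : ℝ) + (j : ℝ) + 1) / 2) *
    ∫ θ in tau σ h..(tau σ h + Real.pi), Real.cos θ ^ i * Real.sin θ ^ (j + 1)

/-- `I i j h = h^((i+j+1)/2) ∫_{τ(h)-π}^{τ(h)} cosⁱθ sin^{j+1}θ dθ = ∫_{L_h⁻} xⁱ yʲ dx`. -/
noncomputable def I (σ : ℝ → ℝ) (i j : ℕ) (h : ℝ) : ℝ :=
  h ^ (((i : ℝ) + (j : ℝ) + 1) / 2) *
    ∫ θ in (tau σ h - Real.pi)..tau σ h, Real.cos θ ^ i * Real.sin θ ^ (j + 1)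

/-- The first-order Melnikov function of the piecewise perturbed linear center with
switching curve `y = x³`, for perturbation polynomials `p⁺, q⁺, p⁻, q⁻`:
`M(h) = √h ∫_{τ(h)}^{τ(h)+π} (q⁺ sin θ + p⁺ cos θ) dθ
      + √h ∫_{τ(h)-π}^{τ(h)} (q⁻ sin θ + p⁻ cos θ) dθ`,
the polynomials being evaluated at `(√h cos θ, √h sin θ)`. -/
noncomputable def Mel (σ : ℝ → ℝ) (pp qp pm qm : MvPolynomial (Fin 2) ℝ) (h : ℝ) : ℝ :=
  Real.sqrt h *
      (∫ θ in tau σ h..(tau σ h + Real.pi),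
        MvPolynomial.eval ![Real.sqrt h * Real.cos θ, Real.sqrt h * Real.sin θ] qp *
            Real.sin θ +
          MvPolynomial.eval ![Real.sqrt h * Real.cos θ, Real.sqrt h * Real.sin θ] pp *
            Real.cos θ) +
    Real.sqrt h *
      (∫ θ in (tau σ h - Real.pi)..tau σ h,
        MvPolynomial.eval ![Real.sqrt h * Real.cos θ, Real.sqrt h * Real.sin θ] qm *
            Real.sin θ +
          MvPolynomial.eval ![Real.sqrt h * Real.cos θ, Real.sqrt h * Real.sin θ] pm *
            Real.cos θ)

/-! ### Half-circle integrals of monomials -/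

/-- On `(0,∞)`, `f` is a polynomial of degree at most `d` in the coordinate `σ(h)`. -/
def GoodAt (σ : ℝ → ℝ) (f : ℝ → ℝ) (d : ℕ) : Prop :=
  ∃ F : Polynomial ℝ, F.natDegree ≤ d ∧ ∀ h : ℝ, 0 < h → f h = F.eval (σ h)

/-- The integral of the monomial `xⁱyʲ` with respect to the angle, over the half of the circle
`x² + y² = h` that starts at the angle `a h`. -/
noncomputable def halfInt (a : ℝ → ℝ) (i j : ℕ) (h : ℝ) : ℝ :=
  ∫ θ in a h..(a h + Real.pi),
    (Real.sqrt h * Real.cos θ) ^ i * (Real.sqrt h * Real.sin θ) ^ j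

theorem halfInt_boundary (s α : ℝ) (i j : ℕ) :
    (s * Real.cos (α + Real.pi)) ^ (i + 1) * (s * Real.sin (α + Real.pi)) ^ (j + 1) -
      (s * Real.cos α) ^ (i + 1) * (s * Real.sin α) ^ (j + 1) =
    ((-1) ^ (i + j) - 1) * ((s * Real.cos α) ^ (i + 1) * (s * Real.sin α) ^ (j + 1)) := by
  rw [Real.cos_add_pi, Real.sin_add_pi,
    show s * -Real.cos α = (-1) * (s * Real.cos α) by ring,
    show s * -Real.sin α = (-1) * (s * Real.sin α) by ring, mul_pow, mul_pow (-1) (s * Real.sin α)]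
  ring

theorem hasDerivAt_monomial (s θ : ℝ) (i j : ℕ) :
    HasDerivAt (fun θ => (s * Real.cos θ) ^ (i + 1) * (s * Real.sin θ) ^ (j + 1))
      (((j : ℝ) + 1) * ((s * Real.cos θ) ^ (i + 2) * (s * Real.sin θ) ^ j) -
        ((i : ℝ) + 1) * ((s * Real.cos θ) ^ i * (s * Real.sin θ) ^ (j + 2))) θ := by
  have h1 := (((Real.hasDerivAt_cos θ).const_mul s).pow (i + 1)).mul
    (((Real.hasDerivAt_sin θ).const_mul s).pow (j + 1))
  refine h1.congr_deriv ?_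
  simp only [Pi.pow_apply, Nat.add_sub_cancel]
  push_cast
  ring

theorem halfInt_sum (a : ℝ → ℝ) (i j : ℕ) {h : ℝ} (hh : 0 < h) :
    halfInt a (i + 2) j h + halfInt a i (j + 2) h = h * halfInt a i j h := by
  unfold halfInt
  rw [← intervalIntegral.integral_add (Continuous.intervalIntegrable (by fun_prop) _ _)
    (Continuous.intervalIntegrable (by fun_prop) _ _), ← intervalIntegral.integral_const_mul]
  congr 1
  ext θ
  have h1 := Real.sq_sqrt hh.le
  have h2 : (Real.sqrt h * Real.cos θ) ^ 2 + (Real.sqrt h * Real.sin θ) ^ 2 = h := by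
    have h3 := Real.sin_sq_add_cos_sq θ
    linear_combination (Real.sqrt h) ^ 2 * h3 + h1
  linear_combination
    ((Real.sqrt h * Real.cos θ) ^ i * (Real.sqrt h * Real.sin θ) ^ j) * h2

/-- The reduction formula obtained by integrating the derivative of `x^{i+1}y^{j+1}` along the
half-circle. -/
theorem halfInt_diff (a : ℝ → ℝ) (i j : ℕ) (h : ℝ) :
    ((j : ℝ) + 1) * halfInt a (i + 2) j h - ((i : ℝ) + 1) * halfInt a i (j + 2) h =
      ((-1) ^ (i + j) - 1) * ((Real.sqrt h * Real.cos (a h)) ^ (i + 1) *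
        (Real.sqrt h * Real.sin (a h)) ^ (j + 1)) := by
  unfold halfInt
  rw [← halfInt_boundary, ← intervalIntegral.integral_const_mul,
    ← intervalIntegral.integral_const_mul,
    ← intervalIntegral.integral_sub (Continuous.intervalIntegrable (by fun_prop) _ _)
      (Continuous.intervalIntegrable (by fun_prop) _ _)]
  exact intervalIntegral.integral_eq_sub_of_hasDerivAt
    (f := fun θ => (Real.sqrt h * Real.cos θ) ^ (i + 1) * (Real.sqrt h * Real.sin θ) ^ (j + 1))
    (fun θ _ => hasDerivAt_monomial (Real.sqrt h) θ i j)
    (Continuous.intervalIntegrable (by fun_prop) _ _)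

/-! ### Polynomiality in `σ(h)` -/

section Reduction

variable {σ : ℝ → ℝ} {a : ℝ → ℝ} {ε : ℝ}

theorem GoodAt.mono {f : ℝ → ℝ} {d e : ℕ} (hf : GoodAt σ f d) (hde : d ≤ e) : GoodAt σ f e := by
  obtain ⟨F, hF, h⟩ := hf
  exact ⟨F, hF.trans hde, h⟩

theorem GoodAt.add {f g : ℝ → ℝ} {d : ℕ} (hf : GoodAt σ f d) (hg : GoodAt σ g d) :
    GoodAt σ (fun h => f h + g h) d := by
  obtain ⟨F, hF, h1⟩ := hf
  obtain ⟨G, hG, h2⟩ := hg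
  exact ⟨F + G, Polynomial.natDegree_add_le_of_degree_le hF hG,
    fun h hh => by simp [h1 h hh, h2 h hh]⟩

theorem GoodAt.const_mul {f : ℝ → ℝ} {d : ℕ} (c : ℝ) (hf : GoodAt σ f d) :
    GoodAt σ (fun h => c * f h) d := by
  obtain ⟨F, hF, h1⟩ := hf
  exact ⟨Polynomial.C c * F, (Polynomial.natDegree_C_mul_le c F).trans hF,
    fun h hh => by simp [h1 h hh]⟩

theorem GoodAt.sum {ι : Type*} (s : Finset ι) {f : ι → ℝ → ℝ} {d : ℕ}
    (hf : ∀ i ∈ s, GoodAt σ (f i) d) : GoodAt σ (fun h => ∑ i ∈ s, f i h) d := by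
  classical
  induction s using Finset.induction_on with
  | empty => exact ⟨0, by simp, by simp⟩
  | insert i s hi ih =>
    simp only [Finset.sum_insert hi]
    exact (hf i (by simp)).add (ih fun k hk => hf k (by simp [hk]))

theorem GoodAt.congr {f g : ℝ → ℝ} {d : ℕ} (hf : GoodAt σ f d)
    (hfg : ∀ h, 0 < h → g h = f h) : GoodAt σ g d := by
  obtain ⟨F, hF, h1⟩ := hf
  exact ⟨F, hF, fun h hh => (hfg h hh).trans (h1 h hh)⟩

theorem goodAt_pow (d : ℕ) : GoodAt σ (fun h => σ h ^ d) d :=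
  ⟨Polynomial.X ^ d, by simp, by simp⟩

theorem GoodAt.mul_h {f : ℝ → ℝ} {d : ℕ} (hf : GoodAt σ f d)
    (hσ : ∀ h : ℝ, 0 < h → 0 < σ h ∧ (σ h) ^ 2 + (σ h) ^ 6 = h) :
    GoodAt σ (fun h => h * f h) (d + 6) := by
  obtain ⟨F, hF, h1⟩ := hf
  refine ⟨(Polynomial.X ^ 2 + Polynomial.X ^ 6) * F, ?_, fun h hh => ?_⟩
  · have h2 : (Polynomial.X ^ 2 + Polynomial.X ^ 6 : Polynomial ℝ).natDegree ≤ 6 := by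
      compute_degree
    exact (Polynomial.natDegree_mul_le).trans (by omega)
  · simp [h1 h hh, (hσ h hh).2]

/-- The value of `x^{i+1}y^{j+1}` at an end point `ε(u, u³)` of the half-circle. -/
theorem goodAt_boundary
    (hc : ∀ h, 0 < h → Real.sqrt h * Real.cos (a h) = ε * σ h)
    (hs : ∀ h, 0 < h → Real.sqrt h * Real.sin (a h) = ε * σ h ^ 3) (i j : ℕ) :
    GoodAt σ (fun h => ((-1) ^ (i + j) - 1) * ((Real.sqrt h * Real.cos (a h)) ^ (i + 1) *
        (Real.sqrt h * Real.sin (a h)) ^ (j + 1))) (3 * (i + j) + 6) := by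
  refine (((goodAt_pow (σ := σ) (i + 1 + 3 * (j + 1))).mono (by omega)).const_mul
    (((-1) ^ (i + j) - 1) * (ε ^ (i + 1) * ε ^ (j + 1)))).congr fun h hh => ?_
  rw [hc h hh, hs h hh, pow_add _ (i + 1), pow_mul]
  ring

theorem goodAt_step
    (hσ : ∀ h : ℝ, 0 < h → 0 < σ h ∧ (σ h) ^ 2 + (σ h) ^ 6 = h)
    (hc : ∀ h, 0 < h → Real.sqrt h * Real.cos (a h) = ε * σ h)
    (hs : ∀ h, 0 < h → Real.sqrt h * Real.sin (a h) = ε * σ h ^ 3) (i j : ℕ)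
    (hij : GoodAt σ (halfInt a i j) (3 * (i + j))) :
    GoodAt σ (halfInt a (i + 2) j) (3 * (i + 2 + j)) ∧
      GoodAt σ (halfInt a i (j + 2)) (3 * (i + (j + 2))) := by
  have hb := goodAt_boundary hc hs i j
  have hm := hij.mul_h hσ
  have h0 : (i : ℝ) + j + 2 ≠ 0 := by positivity
  constructor
  · refine ((((hm.const_mul ((i : ℝ) + 1)).add hb).const_mul ((i : ℝ) + j + 2)⁻¹).mono
      (by omega)).congr fun h hh => ?_
    rw [eq_inv_mul_iff_mul_eq₀ h0, ← halfInt_diff, ← halfInt_sum a i j hh]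
    ring
  · refine ((((hm.const_mul ((j : ℝ) + 1)).add (hb.const_mul (-1))).const_mul
      ((i : ℝ) + j + 2)⁻¹).mono (by omega)).congr fun h hh => ?_
    rw [eq_inv_mul_iff_mul_eq₀ h0, ← halfInt_diff, ← halfInt_sum a i j hh]
    ring

/-- The half-circle integral of `xⁱyʲ` is a polynomial of degree at most `3(i+j)` in `u = σ(h)`,
if the half-circle starts at the point `ε(u, u³)`. -/
theorem goodAt_monomial
    (hσ : ∀ h : ℝ, 0 < h → 0 < σ h ∧ (σ h) ^ 2 + (σ h) ^ 6 = h)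
    (hc : ∀ h, 0 < h → Real.sqrt h * Real.cos (a h) = ε * σ h)
    (hs : ∀ h, 0 < h → Real.sqrt h * Real.sin (a h) = ε * σ h ^ 3) (i j : ℕ) :
    GoodAt σ (halfInt a i j) (3 * (i + j)) := by
  induction i using Nat.twoStepInduction with
  | zero =>
    induction j using Nat.twoStepInduction with
    | zero => exact ⟨Polynomial.C Real.pi, by simp, fun h _ => by simp [halfInt]⟩
    | one =>
      refine (((goodAt_pow (σ := σ) 1).mono (by omega)).const_mul (2 * ε)).congr fun h hh => ?_
      have := hc h hh
      simp only [halfInt, pow_zero, one_mul, pow_one, intervalIntegral.integral_const_mul,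
        integral_sin, Real.cos_add_pi]
      linear_combination 2 * this
    | more j h1 _ => exact (goodAt_step hσ hc hs 0 j h1).2
  | one =>
    induction j using Nat.twoStepInduction with
    | zero =>
      refine (((goodAt_pow (σ := σ) 3).mono (by omega)).const_mul (-2 * ε)).congr fun h hh => ?_
      have := hs h hh
      simp only [halfInt, pow_zero, mul_one, pow_one, intervalIntegral.integral_const_mul,
        integral_cos, Real.sin_add_pi]
      linear_combination (-2) * this
    | one =>
      refine ⟨0, by simp, fun h hh => ?_⟩
      have h1 : ∀ θ, (Real.sqrt h * Real.cos θ) ^ 1 * (Real.sqrt h * Real.sin θ) ^ 1 =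
          h * (Real.sin θ * Real.cos θ) := fun θ => by
        linear_combination (Real.cos θ * Real.sin θ) * Real.mul_self_sqrt hh.le
      simp only [halfInt, h1, intervalIntegral.integral_const_mul, integral_sin_mul_cos₁,
        Real.sin_add_pi]
      simp
    | more j h1 _ => exact (goodAt_step hσ hc hs 1 j h1).2
  | more i h1 _ => exact (goodAt_step hσ hc hs i j h1).1

theorem goodAt_poly
    (hσ : ∀ h : ℝ, 0 < h → 0 < σ h ∧ (σ h) ^ 2 + (σ h) ^ 6 = h)
    (hc : ∀ h, 0 < h → Real.sqrt h * Real.cos (a h) = ε * σ h)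
    (hs : ∀ h, 0 < h → Real.sqrt h * Real.sin (a h) = ε * σ h ^ 3)
    (P : MvPolynomial (Fin 2) ℝ) (d : ℕ) (hP : P.totalDegree ≤ d) :
    GoodAt σ (fun h => ∫ θ in a h..(a h + Real.pi),
      MvPolynomial.eval ![Real.sqrt h * Real.cos θ, Real.sqrt h * Real.sin θ] P) (3 * d) := by
  have key : GoodAt σ (fun h => ∑ e ∈ P.support, P.coeff e * halfInt a (e 0) (e 1) h) (3 * d) := by
    refine GoodAt.sum _ fun e he => ((goodAt_monomial hσ hc hs _ _).mono ?_).const_mul _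
    have h1 := (MvPolynomial.le_totalDegree he).trans hP
    rw [Finsupp.sum_fintype _ _ (fun _ => rfl), Fin.sum_univ_two] at h1
    omega
  refine key.congr fun h _ => ?_
  simp only [MvPolynomial.eval_eq', Fin.prod_univ_two, Matrix.cons_val_zero, Matrix.cons_val_one]
  rw [intervalIntegral.integral_finsetSum
    fun e _ => Continuous.intervalIntegrable (by fun_prop) _ _]
  simp only [intervalIntegral.integral_const_mul, halfInt]

theorem goodAt_half
    (hσ : ∀ h : ℝ, 0 < h → 0 < σ h ∧ (σ h) ^ 2 + (σ h) ^ 6 = h)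
    (hc : ∀ h, 0 < h → Real.sqrt h * Real.cos (a h) = ε * σ h)
    (hs : ∀ h, 0 < h → Real.sqrt h * Real.sin (a h) = ε * σ h ^ 3)
    (p q : MvPolynomial (Fin 2) ℝ) (n : ℕ) (hp : p.totalDegree ≤ n) (hq : q.totalDegree ≤ n) :
    GoodAt σ (fun h => Real.sqrt h * ∫ θ in a h..(a h + Real.pi),
      (MvPolynomial.eval ![Real.sqrt h * Real.cos θ, Real.sqrt h * Real.sin θ] q * Real.sin θ +
       MvPolynomial.eval ![Real.sqrt h * Real.cos θ, Real.sqrt h * Real.sin θ] p * Real.cos θ))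
      (3 * (n + 1)) := by
  have hd : (q * MvPolynomial.X 1 + p * MvPolynomial.X 0).totalDegree ≤ n + 1 := by
    refine (MvPolynomial.totalDegree_add _ _).trans (max_le ?_ ?_) <;>
    · refine (MvPolynomial.totalDegree_mul _ _).trans ?_
      rw [MvPolynomial.totalDegree_X]
      omega
  refine (goodAt_poly hσ hc hs _ _ hd).congr fun h _ => ?_
  rw [← intervalIntegral.integral_const_mul]
  congr 1
  ext θ
  simp only [map_add, map_mul, MvPolynomial.eval_X, Matrix.cons_val_zero, Matrix.cons_val_one]
  ring

end Reduction

/-! ### The Melnikov function in the coordinate `σ(h)` -/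

theorem sqrt_mul_cos_sin_tau {σ : ℝ → ℝ} {h : ℝ}
    (hσ : 0 < σ h ∧ (σ h) ^ 2 + (σ h) ^ 6 = h) :
    Real.sqrt h * Real.cos (tau σ h) = σ h ∧ Real.sqrt h * Real.sin (tau σ h) = σ h ^ 3 := by
  obtain ⟨h0, h1⟩ := hσ
  have hpos : 0 < Real.sqrt (1 + (σ h ^ 2) ^ 2) := Real.sqrt_pos.2 (by positivity)
  have h2 : Real.sqrt h = σ h * Real.sqrt (1 + (σ h ^ 2) ^ 2) := by
    conv_lhs => rw [← h1, show σ h ^ 2 + σ h ^ 6 = σ h ^ 2 * (1 + (σ h ^ 2) ^ 2) by ring]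
    rw [Real.sqrt_mul (by positivity), Real.sqrt_sq h0.le]
  rw [tau, Real.cos_arctan, Real.sin_arctan, h2]
  constructor <;> field_simp

/-- The Melnikov function is a polynomial of degree at most `3(n+1)` in `σ(h)`. -/
theorem goodAt_Mel (n : ℕ) (σ : ℝ → ℝ)
    (hσ : ∀ h : ℝ, 0 < h → 0 < σ h ∧ (σ h) ^ 2 + (σ h) ^ 6 = h)
    (pp qp pm qm : MvPolynomial (Fin 2) ℝ)
    (hpp : pp.totalDegree ≤ n) (hqp : qp.totalDegree ≤ n)
    (hpm : pm.totalDegree ≤ n) (hqm : qm.totalDegree ≤ n) :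
    GoodAt σ (Mel σ pp qp pm qm) (3 * (n + 1)) := by
  have h1 := goodAt_half (a := tau σ) (ε := 1) hσ
    (fun h hh => by rw [(sqrt_mul_cos_sin_tau (hσ h hh)).1, one_mul])
    (fun h hh => by rw [(sqrt_mul_cos_sin_tau (hσ h hh)).2, one_mul]) pp qp n hpp hqp
  have h2 := goodAt_half (a := fun h => tau σ h - Real.pi) (ε := -1) hσ
    (fun h hh => by
      rw [Real.cos_sub_pi]; linear_combination -(sqrt_mul_cos_sin_tau (hσ h hh)).1)
    (fun h hh => by
      rw [Real.sin_sub_pi]; linear_combination -(sqrt_mul_cos_sin_tau (hσ h hh)).2) pm qm n hpm hqm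
  refine (h1.add h2).congr fun h _ => ?_
  simp only [Mel, sub_add_cancel]

/-! ### Orders of vanishing -/

theorem analyticOrderAt_polynomial {F : Polynomial ℝ} (hF : F ≠ 0) (x : ℝ) :
    analyticOrderAt (fun y => F.eval y) x = F.rootMultiplicity x := by
  have han : ∀ G : Polynomial ℝ, AnalyticAt ℝ (fun y => G.eval y) x := fun G => by
    simpa using AnalyticAt.aeval_polynomial (analyticAt_id (𝕜 := ℝ) (z := x)) G
  rw [(han F).analyticOrderAt_eq_natCast]
  obtain ⟨Q, hQ, hr⟩ := Polynomial.exists_eq_pow_rootMultiplicity_mul_and_not_dvd F hF x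
  refine ⟨fun y => Q.eval y, han Q, fun h => hr (Polynomial.dvd_iff_isRoot.2 h),
    Filter.Eventually.of_forall fun y => ?_⟩
  conv_lhs => rw [hQ]
  simp

/-- The order of vanishing of `M` at `φ(u) = u² + u⁶` is at most the multiplicity of `u` as a root
of the polynomial `F = M ∘ φ`. -/
theorem le_rootMultiplicity {M : ℝ → ℝ} {F : Polynomial ℝ} (hF : F ≠ 0)
    (hMF : ∀ u : ℝ, 0 < u → M (u ^ 2 + u ^ 6) = F.eval u) {u : ℝ} (hu : 0 < u) (k : ℕ)
    (hk : ∀ i < k, iteratedDeriv i M (u ^ 2 + u ^ 6) = 0) : k ≤ F.rootMultiplicity u := by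
  set φ : ℝ → ℝ := fun u => u ^ 2 + u ^ 6 with hφ
  have hφa : AnalyticAt ℝ φ u := by fun_prop
  have hφd : deriv φ u ≠ 0 := by
    have h1 : HasDerivAt φ (2 * u + 6 * u ^ 5) u :=
      ((hasDerivAt_pow 2 u).add (hasDerivAt_pow 6 u)).congr_deriv (by norm_num)
    rw [h1.deriv]
    positivity
  have hev : (fun y => F.eval y) =ᶠ[nhds u] M ∘ φ := by
    filter_upwards [lt_mem_nhds hu] with y hy using (hMF y hy).symm
  have hFa : AnalyticAt ℝ (fun y => F.eval y) u := by
    simpa using AnalyticAt.aeval_polynomial (analyticAt_id (𝕜 := ℝ) (z := u)) F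
  have hMa : AnalyticAt ℝ M (φ u) :=
    (analyticAt_comp_iff_of_deriv_ne_zero hφa hφd).1 (hFa.congr hev)
  have h1 := (natCast_le_analyticOrderAt_iff_iteratedDeriv_eq_zero hMa).2 hk
  rw [← analyticOrderAt_comp_of_deriv_ne_zero hφa hφd, ← analyticOrderAt_congr hev,
    analyticOrderAt_polynomial hF] at h1
  exact_mod_cast h1

/-! ### Counting zeros -/

/-- If the first-order Melnikov function is not identically zero on `(0,∞)`, then it
has at most `6⌊n/2⌋ + 6` zeros on `(0,∞)` counted with multiplicity (order of
vanishing): for any finite set of points in `(0,∞)` at which `M` vanishes to order at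
least `m h₀`, the total `∑ m h₀` is at most `6⌊n/2⌋ + 6`. -/
theorem Mel_zero_count (n : ℕ) (hn : 1 ≤ n) (σ : ℝ → ℝ)
    (hσ : ∀ h : ℝ, 0 < h → 0 < σ h ∧ (σ h) ^ 2 + (σ h) ^ 6 = h)
    (pp qp pm qm : MvPolynomial (Fin 2) ℝ)
    (hpp : pp.totalDegree ≤ n) (hqp : qp.totalDegree ≤ n)
    (hpm : pm.totalDegree ≤ n) (hqm : qm.totalDegree ≤ n)
    (hM : ∃ h : ℝ, 0 < h ∧ Mel σ pp qp pm qm h ≠ 0)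
    (S : Finset ℝ) (hS : ∀ h₀ ∈ S, 0 < h₀) (m : ℝ → ℕ)
    (hmul : ∀ h₀ ∈ S, ∀ k < m h₀, iteratedDeriv k (Mel σ pp qp pm qm) h₀ = 0) :
    ∑ h₀ ∈ S, m h₀ ≤ 6 * (n / 2) + 6 := by
    classical
  obtain ⟨F, hdeg, hMF⟩ := goodAt_Mel n σ hσ pp qp pm qm hpp hqp hpm hqm
  have hF : F ≠ 0 := by
    rintro rfl
    obtain ⟨h, hh, hne⟩ := hM
    exact hne (by simp [hMF h hh])
  have hinv : ∀ u : ℝ, 0 < u → σ (u ^ 2 + u ^ 6) = u := fun u hu => by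
    obtain ⟨h1, h2⟩ := hσ (u ^ 2 + u ^ 6) (by positivity)
    by_contra hne
    rcases lt_or_gt_of_ne hne with hlt | hlt
    · have := pow_lt_pow_left₀ hlt h1.le two_ne_zero
      have := pow_lt_pow_left₀ hlt h1.le (n := 6) (by norm_num)
      linarith
    · have := pow_lt_pow_left₀ hlt hu.le two_ne_zero
      have := pow_lt_pow_left₀ hlt hu.le (n := 6) (by norm_num)
      linarith
  have hle : ∀ h₀ ∈ S, m h₀ ≤ F.roots.count (σ h₀) := fun h₀ h0 => by
    obtain ⟨h1, h2⟩ := hσ h₀ (hS h₀ h0)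
    rw [Polynomial.count_roots]
    refine le_rootMultiplicity (M := Mel σ pp qp pm qm) hF (fun u hu => ?_) h1 _ ?_
    · rw [hMF _ (by positivity), hinv u hu]
    · rw [h2]
      exact hmul h₀ h0
  have hinj : Set.InjOn σ S := fun x hx y hy hxy => by
    rw [← (hσ x (hS x hx)).2, ← (hσ y (hS y hy)).2, hxy]
  calc ∑ h₀ ∈ S, m h₀ ≤ ∑ h₀ ∈ S, F.roots.count (σ h₀) := Finset.sum_le_sum hle
    _ = ∑ u ∈ S.image σ, F.roots.count u := (Finset.sum_image (f := fun u => F.roots.count u) hinj).symm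
    _ ≤ ∑ u ∈ F.roots.toFinset, F.roots.count u := Finset.sum_le_sum_of_ne_zero fun u _ hu =>
        Multiset.mem_toFinset.2 (Multiset.count_ne_zero.1 hu)
    _ = F.roots.card := F.roots.toFinset_sum_count_eq
    _ ≤ F.natDegree := F.card_roots'
    _ ≤ 6 * (n / 2) + 6 := by omega
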